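/- Let N ∈ ℕ, let {1,…,N} = R ⊔ S be a partition, let u ∈ {0,1}^N be supported on R and v ∈ {0,1}^N be supported on S. Then for all w, t ∈ {0,1}^N: ⟨φ+_N, ((σz(t)σx(w)) ⊗ (Π^σx_u Π^σz_v)) φ+_N⟩ = 2^{−N} (−1)^{w·u + t·v} if w is supported on R and t is supported on S, and this inner product equals 0 otherwise (i.e., if w_j ≠ 0 for some j ∈ S or t_j ≠ 0 for some j ∈ R). -/

import Mathlib

open scoped Matrix Kronecker ComplexConjugate

noncomputable section

/-- Bit vectors of length `N`, i.e. elements of `{0,1}^N`. -/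
abbrev BV (N : ℕ) := Fin N → Bool

/-- The space `Q_N` of functions `{0,1}^N → ℂ`. -/
abbrev QV (N : ℕ) := BV N → ℂ

/-- Linear operators on `Q_N`, represented as matrices in the standard basis. -/
abbrev QOp (N : ℕ) := Matrix (BV N) (BV N) ℂ

/-- Bitwise XOR of bit vectors. -/
def bvXor {N : ℕ} (x r : BV N) : BV N := fun i => xor (x i) (r i)

/-- The sign `(-1)^{s·x}` where `s·x = Σ_i s_i x_i mod 2`. -/
def bSign {N : ℕ} (s x : BV N) : ℂ :=
  (-1 : ℂ) ^ (Finset.univ.filter fun i => s i = true ∧ x i = true).card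

/-- The standard basis vector `e_x` of `Q_N`. -/
def eVec {N : ℕ} (x : BV N) : QV N := fun y => if y = x then 1 else 0

/-- Tensor product of two vectors (as functions). -/
def tensVec {α β : Type*} (f : α → ℂ) (g : β → ℂ) : α × β → ℂ := fun p => f p.1 * g p.2

/-- The Pauli parity operator `σx(r)`, sending `e_x` to `e_{x ⊕ r}`. -/
def sigmaX {N : ℕ} (r : BV N) : QOp N :=
  Matrix.of fun y x => if y = bvXor x r then 1 else 0

/-- The Pauli parity operator `σz(s)`, sending `e_x` to `(-1)^{s·x} e_x`. -/
def sigmaZ {N : ℕ} (s : BV N) : QOp N :=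
  Matrix.diagonal fun x => bSign s x

/-- The scalar `2^{-N/2}`. -/
def invSqrt2pow (N : ℕ) : ℂ := (((Real.sqrt 2)⁻¹ : ℝ) : ℂ) ^ N

/-- The maximally entangled state `φ⁺_N = 2^{-N/2} Σ_x e_x ⊗ e_x`. -/
def phiPlus (N : ℕ) : BV N × BV N → ℂ :=
  invSqrt2pow N • ∑ x : BV N, tensVec (eVec x) (eVec x)

/-- The standard (complex) inner product on a finite function space. -/
def qInner {α : Type*} [Fintype α] (f g : α → ℂ) : ℂ :=
  ∑ x, (starRingEnd ℂ) (f x) * g x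

/-- The norm associated to `qInner`. -/
def qNorm {α : Type*} [Fintype α] (f : α → ℂ) : ℝ :=
  Real.sqrt (qInner f f).re

/-- A binary observable: a self-adjoint operator squaring to the identity. -/
def IsBinaryObs {ι : Type*} [Fintype ι] [DecidableEq ι] (O : Matrix ι ι ℂ) : Prop :=
  O.IsHermitian ∧ O * O = 1

/-- For pairwise commuting operators `X i`, the parity product `X(r) = ∏_{i : r_i = 1} X_i`. -/
def obsProd {n : ℕ} {ι : Type*} [Fintype ι] [DecidableEq ι]
    (X : Fin n → Matrix ι ι ℂ) (hX : ∀ i j, Commute (X i) (X j)) (r : BV n) :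
    Matrix ι ι ℂ :=
  (Finset.univ.filter fun i => r i = true).noncommProd X fun i _ j _ _ => hX i j

/-- The set of bit vectors supported on `R`. -/
def suppSet {N : ℕ} (R : Finset (Fin N)) : Finset (BV N) :=
  Finset.univ.filter fun u => ∀ i, u i = true → i ∈ R

/-- The projector `Π^{σx}_u = 2^{-|R|} Σ_{u' supported on R} (-1)^{u·u'} σx(u')`. -/
def projPauliX {N : ℕ} (R : Finset (Fin N)) (u : BV N) : QOp N :=
  ((2 : ℂ) ^ R.card)⁻¹ • ∑ u' ∈ suppSet R, bSign u u' • sigmaX u'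

/-- The projector `Π^{σz}_v = 2^{-|S|} Σ_{v' supported on S} (-1)^{v·v'} σz(v')`. -/
def projPauliZ {N : ℕ} (S : Finset (Fin N)) (v : BV N) : QOp N :=
  ((2 : ℂ) ^ S.card)⁻¹ • ∑ v' ∈ suppSet S, bSign v v' • sigmaZ v'

/-- The projector `Π^X_u = 2^{-|R|} Σ_{u' supported on R} (-1)^{u·u'} X(u')`
for a family of commuting binary observables. -/
def projObs {N : ℕ} {ι : Type*} [Fintype ι] [DecidableEq ι]
    (X : Fin N → Matrix ι ι ℂ) (hX : ∀ i j, Commute (X i) (X j))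
    (R : Finset (Fin N)) (u : BV N) : Matrix ι ι ℂ :=
  ((2 : ℂ) ^ R.card)⁻¹ • ∑ u' ∈ suppSet R, bSign u u' • obsProd X hX u'

/-- The extracted global vector
`Φ = 2^{-N} Σ_{r,s} (X(r)Z(s) ⊗ σx(r)σz(s) ⊗ Id)(ψ ⊗ φ⁺_N)`. -/
def extractedVec {N : ℕ} {ι : Type*} [Fintype ι] [DecidableEq ι]
    (X Z : Fin N → Matrix ι ι ℂ)
    (hX : ∀ i j, Commute (X i) (X j)) (hZ : ∀ i j, Commute (Z i) (Z j))
    (ψ : ι → ℂ) : ι × BV N × BV N → ℂ :=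
  ((2 : ℂ) ^ N)⁻¹ • ∑ r : BV N, ∑ s : BV N,
    ((obsProd X hX r * obsProd Z hZ s) ⊗ₖ ((sigmaX r * sigmaZ s) ⊗ₖ (1 : QOp N))).mulVec
      (tensVec ψ (phiPlus N))


theorem aux_bSign {N : ℕ} (s x : BV N) :
    bSign s x = ∏ i, (if s i = true ∧ x i = true then (-1 : ℂ) else 1) := by
  rw [bSign, Finset.prod_ite]
  simp

theorem aux_comm {N : ℕ} (s x : BV N) : bSign s x = bSign x s := by
  simp only [aux_bSign, and_comm]

theorem aux_xor {N : ℕ} (s x y : BV N) :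
    bSign s (bvXor x y) = bSign s x * bSign s y := by
  simp only [aux_bSign, ← Finset.prod_mul_distrib, bvXor]
  refine Finset.prod_congr rfl fun i _ => ?_
  by_cases hs : s i = true <;> by_cases hx : x i = true <;> by_cases hy : y i = true <;>
    simp [hs, hx, hy]

theorem aux_orth {N : ℕ} (s t : BV N) :
    ∑ y : BV N, bSign s y * bSign t y = if s = t then (2 : ℂ) ^ N else 0 := by
  simp only [aux_bSign, ← Finset.prod_mul_distrib]
  have h := Finset.prod_univ_sum (fun _ : Fin N => (Finset.univ : Finset Bool))
    (fun i b => (if s i = true ∧ b = true then (-1 : ℂ) else 1) *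
      (if t i = true ∧ b = true then (-1 : ℂ) else 1))
  rw [Fintype.piFinset_univ] at h
  rw [← h]
  have h2 : ∀ i, (∑ b : Bool, (if s i = true ∧ b = true then (-1 : ℂ) else 1) *
      (if t i = true ∧ b = true then (-1 : ℂ) else 1)) = if s i = t i then 2 else 0 := by
    intro i
    cases s i <;> cases t i <;> simp <;> norm_num
  simp only [h2]
  split_ifs with hst
  · subst hst
    simp
  · obtain ⟨i, hi⟩ := Function.ne_iff.mp hst
    exact Finset.prod_eq_zero (Finset.mem_univ i) (by simp [hi])

theorem aux_xor_inj {N : ℕ} (y w r : BV N) : bvXor y w = bvXor y r ↔ w = r := by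
  constructor
  · intro h
    funext i
    have := congrFun h i
    simpa [bvXor] using this
  · rintro rfl
    rfl

theorem aux_phi {N : ℕ} (a b : BV N) :
    phiPlus N (a, b) = if a = b then invSqrt2pow N else 0 := by
  simp [phiPlus, tensVec, eVec, Finset.sum_apply]

theorem aux_scal (N : ℕ) :
    (starRingEnd ℂ) (invSqrt2pow N) * invSqrt2pow N = ((2 : ℂ) ^ N)⁻¹ := by
  simp only [invSqrt2pow, map_pow, Complex.conj_ofReal]
  rw [← mul_pow, ← Complex.ofReal_mul, ← mul_inv, Real.mul_self_sqrt (by norm_num)]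
  simp

theorem aux_inner {N : ℕ} (A B : QOp N) :
    qInner (phiPlus N) ((A ⊗ₖ B).mulVec (phiPlus N)) =
      ((2 : ℂ) ^ N)⁻¹ * ∑ y, ∑ x, A x y * B x y := by
  rw [← aux_scal, Finset.sum_comm, Finset.mul_sum]
  simp only [qInner, Matrix.mulVec, dotProduct, Fintype.sum_prod_type, aux_phi,
    Matrix.kroneckerMap_apply]
  refine Finset.sum_congr rfl fun x _ => ?_
  rw [Finset.sum_eq_single x (by intro b _ hb; simp [hb.symm]) (by simp)]
  simp only [if_true, mul_ite, mul_zero, Finset.sum_ite_eq, Finset.mem_univ, ite_true,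
    Finset.mul_sum]
  refine Finset.sum_congr rfl fun y _ => ?_
  ring

theorem aux_A {N : ℕ} (t w x y : BV N) :
    (sigmaZ t * sigmaX w) x y = if x = bvXor y w then bSign t x else 0 := by
  simp [sigmaZ, sigmaX, Matrix.diagonal_mul]

theorem aux_B {N : ℕ} (R S : Finset (Fin N)) (u v x y : BV N) :
    (projPauliX R u * projPauliZ S v) x y =
      ((2 : ℂ) ^ R.card)⁻¹ * ((2 : ℂ) ^ S.card)⁻¹ *
        ((∑ u' ∈ suppSet R, bSign u u' * if x = bvXor y u' then 1 else 0) *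
          ∑ v' ∈ suppSet S, bSign v v' * bSign v' y) := by
  have hZ : projPauliZ S v = Matrix.diagonal fun y =>
      ((2 : ℂ) ^ S.card)⁻¹ * ∑ v' ∈ suppSet S, bSign v v' * bSign v' y := by
    ext a b
    by_cases hab : a = b
    · subst hab
      simp [projPauliZ, sigmaZ, Matrix.sum_apply]
    · simp [projPauliZ, sigmaZ, Matrix.sum_apply, hab]
  rw [hZ, Matrix.mul_diagonal]
  simp only [projPauliX, sigmaX, Matrix.smul_apply, Matrix.sum_apply, Matrix.of_apply, smul_eq_mul]
  ring

theorem aux_disj {N : ℕ} (R S : Finset (Fin N)) (hRS : Disjoint R S) (t w : BV N)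
    (hw : w ∈ suppSet R) (ht : t ∈ suppSet S) : bSign t w = 1 := by
  simp only [suppSet, Finset.mem_filter, Finset.mem_univ, true_and] at hw ht
  rw [aux_bSign]
  refine Finset.prod_eq_one fun i _ => ?_
  rw [if_neg]
  rintro ⟨h1, h2⟩
  exact Finset.disjoint_left.mp hRS (hw i h2) (ht i h1)

/-- inner products of `φ⁺_N` against `σz(t)σx(w) ⊗ Π^{σx}_u Π^{σz}_v`. -/
theorem phiPlus_pauli_projector_inner (N : ℕ) (R S : Finset (Fin N))
    (hRS : Disjoint R S) (hRScover : R ∪ S = Finset.univ)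
    (u v : BV N) (hu : u ∈ suppSet R) (hv : v ∈ suppSet S) (w t : BV N) :
    qInner (phiPlus N)
        (((sigmaZ t * sigmaX w) ⊗ₖ (projPauliX R u * projPauliZ S v)).mulVec (phiPlus N))
      = if w ∈ suppSet R ∧ t ∈ suppSet S
          then ((2 : ℂ) ^ N)⁻¹ * bSign w u * bSign t v
          else 0 := by
  have hc : R.card + S.card = N := by
    rw [← Finset.card_union_of_disjoint hRS, hRScover]
    simp
  have hc2 : ((2 : ℂ) ^ R.card)⁻¹ * ((2 : ℂ) ^ S.card)⁻¹ = ((2 : ℂ) ^ N)⁻¹ := by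
    rw [← mul_inv, ← pow_add, hc]
  have key : ∑ y, ∑ x, (sigmaZ t * sigmaX w) x y * (projPauliX R u * projPauliZ S v) x y =
      ((2 : ℂ) ^ N)⁻¹ * ((if w ∈ suppSet R then bSign u w else 0) * bSign t w *
        ∑ v' ∈ suppSet S, bSign v v' * ∑ y, bSign t y * bSign v' y) := by
    simp only [aux_A, ite_mul, zero_mul, Finset.sum_ite_eq', Finset.sum_ite_eq,
      Finset.mem_univ, if_true]
    simp only [aux_B, hc2, aux_xor_inj, mul_ite, mul_one, mul_zero, Finset.sum_ite_eq, aux_xor]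
    by_cases hw : w ∈ suppSet R
    · simp only [hw, if_true, Finset.mul_sum]
      rw [Finset.sum_comm]
      refine Finset.sum_congr rfl fun v' _ => Finset.sum_congr rfl fun y _ => ?_
      ring
    · simp [hw]
  rw [aux_inner, key]
  simp only [aux_orth, mul_ite, mul_zero, Finset.sum_ite_eq]
  have h2 : ((2 : ℂ) ^ N) ≠ 0 := pow_ne_zero _ two_ne_zero
  by_cases hw : w ∈ suppSet R <;> by_cases ht : t ∈ suppSet S
  · simp only [hw, ht, and_self, if_true, aux_disj R S hRS t w hw ht, aux_comm u w, aux_comm v t]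
    field_simp
  all_goals simp [hw, ht]

end
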